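/- Let f be a smooth cubic form in four variables over 𝔽₂ that vanishes at every point of 𝔽₂⁴ (i.e., the cubic surface f = 0 passes through all 15 points of ℙ³(𝔽₂)). Then there exists g ∈ GL₄(𝔽₂) with f ∘ g = c₀, where c₀ = x²t + y²z + yz² + xt²; moreover, the stabilizer {g ∈ GL₄(𝔽₂) : f ∘ g = f} is isomorphic to the symmetric group S₆. -/

import Mathlib

open MvPolynomial

noncomputable section

/-- The field with two elements. -/
abbrev F2 : Type := ZMod 2

/-- An algebraic closure of `F2`. -/
abbrev Kbar : Type := AlgebraicClosure F2

/-- Linear substitution action of a matrix `g` on a polynomial `f`: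
`(act g f)(x) = f (g * x)`, i.e. the variable `X i` is replaced by `∑ j, g i j • X j`. -/
def act (g : Matrix (Fin 4) (Fin 4) F2) (f : MvPolynomial (Fin 4) F2) :
    MvPolynomial (Fin 4) F2 :=
  aeval (fun i => ∑ j, g i j • X j) f

lemma act_one (f : MvPolynomial (Fin 4) F2) : act 1 f = f := by
  have h : (fun i => ∑ j, (1 : Matrix (Fin 4) (Fin 4) F2) i j • (X j : MvPolynomial (Fin 4) F2))
      = X := by
    funext i
    simp [Matrix.one_apply, ite_smul]
  simp [act, h]

lemma act_act (g h : Matrix (Fin 4) (Fin 4) F2) (f : MvPolynomial (Fin 4) F2) :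
    act g (act h f) = act (h * g) f := by
  show (aeval _) ((aeval _) f) = _
  rw [← AlgHom.comp_apply, comp_aeval]
  have key : (fun i => (aeval fun i => ∑ j, g i j • (X j : MvPolynomial (Fin 4) F2))
        (∑ j, h i j • (X j : MvPolynomial (Fin 4) F2)))
      = fun i => ∑ j, (h * g) i j • (X j : MvPolynomial (Fin 4) F2) := by
    funext i
    simp only [map_sum, map_smul, aeval_X, Matrix.mul_apply, Finset.smul_sum, smul_smul,
      Finset.sum_smul]
    rw [Finset.sum_comm]
  rw [key]
  rfl

/-- The stabilizer of a polynomial `f` under the linear-substitution action of `GL₄(𝔽₂)`. -/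
def stab (f : MvPolynomial (Fin 4) F2) : Subgroup (GL (Fin 4) F2) where
  carrier := {g | act (g : Matrix (Fin 4) (Fin 4) F2) f = f}
  one_mem' := by simpa using act_one f
  mul_mem' := by
    intro a b ha hb
    simp only [Set.mem_setOf_eq] at *
    have : act ((↑(a * b) : Matrix (Fin 4) (Fin 4) F2)) f = act ↑b (act ↑a f) := by
      rw [act_act]; rfl
    rw [this, ha, hb]
  inv_mem' := by
    intro a ha
    simp only [Set.mem_setOf_eq] at *
    have h2 := congrArg (act ((↑(a⁻¹) : Matrix (Fin 4) (Fin 4) F2))) ha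
    rw [act_act] at h2
    rw [Units.mul_inv, act_one] at h2
    exact h2.symm

/-- A smooth cubic form over `𝔽₂`: homogeneous of degree `3`, such that over an algebraic
closure the only common zero of `f` and its four partial derivatives is the origin. -/
def IsSmoothCubic (f : MvPolynomial (Fin 4) F2) : Prop :=
  f.IsHomogeneous 3 ∧
    ∀ v : Fin 4 → Kbar,
      eval v (map (algebraMap F2 Kbar) f) = 0 →
      (∀ i : Fin 4, eval v (map (algebraMap F2 Kbar) (pderiv i f)) = 0) →
      v = 0

/-- The cubic form `x²t + y²z + yz² + xt²`. -/
def c0 : MvPolynomial (Fin 4) F2 :=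
  X 0 ^ 2 * X 3 + X 1 ^ 2 * X 2 + X 1 * X 2 ^ 2 + X 0 * X 3 ^ 2

/-!
A monomial of degree `3` with an exponent at least `2` has the form `xᵢ²xⱼ`. On `𝔽₂`-points it
agrees with `xᵢxⱼ`, while the other cubic monomials are squarefree, so a cubic form that vanishes
on `𝔽₂⁴` has no squarefree monomials and is `f = ∑ Aᵢⱼ xᵢ²xⱼ` with `f v = vᵀ A v = 0`, that is,
with `A` alternating. A substitution `g` replaces `A` by `gᵀ A g`, and the partial derivatives of
`f` at an `𝔽₂`-point `v` are the entries of `vᵀ A`. Smoothness therefore makes `A` nondegenerate,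
a symplectic basis brings it to the Gram matrix of `c₀`, and the stabilizer is the symplectic
group `Sp₄(2)`. This group acts on the six quadratic forms of Arf invariant `1` whose polar form
is `A`: faithfully, since their differences are all the linear forms, and as the full symmetric
group, since transvections act as the transpositions.
-/

universe u

open scoped Matrix

section FrobeniusForm

variable {n R K : Type*} [CommSemiring R] [Field K] [Fintype K]

/-- The Frobenius form `∑ i, j, A i j xᵢ^q xⱼ` of a matrix `A`. For `q = 1` this is the quadratic
form of `A`. -/
def frobeniusForm [Fintype n] (q : ℕ) (A : Matrix n n R) : MvPolynomial n R :=
  ∑ i, ∑ j, A i j • (X i ^ q * X j)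

lemma frobeniusForm_eq_sum_monomial [Fintype n] (q : ℕ) (A : Matrix n n R) :
    frobeniusForm q A = ∑ i, ∑ j, monomial (Finsupp.single i q + Finsupp.single j 1) (A i j) := by
  refine Finset.sum_congr rfl fun i _ => Finset.sum_congr rfl fun j _ => ?_
  rw [X_pow_eq_monomial, X, monomial_mul, smul_monomial, smul_eq_mul, mul_one, mul_one]

lemma isHomogeneous_frobeniusForm [Fintype n] (q : ℕ) (A : Matrix n n R) :
    (frobeniusForm q A).IsHomogeneous (q + 1) := by
  rw [frobeniusForm_eq_sum_monomial]
  refine IsHomogeneous.sum _ _ _ fun i _ => IsHomogeneous.sum _ _ _ fun j _ => ?_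
  exact isHomogeneous_monomial _ (by simp)

lemma single_add_single_injective {q : ℕ} (hq : 1 < q) :
    Function.Injective fun ij : n × n =>
      (Finsupp.single ij.1 q + Finsupp.single ij.2 1 : n →₀ ℕ) := by
  classical
  rintro ⟨i, j⟩ ⟨k, l⟩ h
  obtain rfl : i = k := by
    by_contra hik
    have hi := DFunLike.congr_fun h i
    simp only [Finsupp.add_apply, Finsupp.single_apply, if_neg (Ne.symm hik)] at hi
    split_ifs at hi <;> omega
  simpa [Finsupp.single_left_inj] using h

lemma coeff_frobeniusForm [Fintype n] {q : ℕ} (hq : 1 < q) (A : Matrix n n R) (i j : n) :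
    coeff (Finsupp.single i q + Finsupp.single j 1) (frobeniusForm q A) = A i j := by
  classical
  rw [frobeniusForm_eq_sum_monomial, ← Fintype.sum_prod_type', coeff_sum]
  simp only [coeff_monomial, (single_add_single_injective hq).eq_iff (a := (_, _)) (b := (i, j))]
  simp

lemma frobeniusForm_injective [Fintype n] {q : ℕ} (hq : 1 < q) :
    Function.Injective (frobeniusForm q : Matrix n n R → MvPolynomial n R) := by
  intro A B h
  ext i j
  rw [← coeff_frobeniusForm hq A, h, coeff_frobeniusForm hq]

lemma pderiv_frobeniusForm [Fintype n] {q : ℕ} (hq : (q : R) = 0) (A : Matrix n n R) (k : n) :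
    pderiv k (frobeniusForm q A) = ∑ i, A i k • X i ^ q := by
  classical
  have pderiv_X_pow (i : n) : pderiv k (X i ^ q : MvPolynomial n R) = 0 := by
    rw [Derivation.leibniz_pow, ← Nat.cast_smul_eq_nsmul R, hq, zero_smul]
  simp only [frobeniusForm, map_sum, Derivation.map_smul, Derivation.leibniz, pderiv_X_pow,
    add_zero, pderiv_X, Pi.single_apply, smul_eq_mul, mul_ite, mul_one, mul_zero]
  simp

lemma eval_frobeniusForm [Fintype n] [DecidableEq n] (A : Matrix n n K) (v : n → K) :
    eval v (frobeniusForm (Fintype.card K) A) = Matrix.toBilin' A v v := by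
  simp only [frobeniusForm, Matrix.toBilin'_apply, map_sum, smul_eval, map_mul, map_pow, eval_X,
    FiniteField.pow_card, mul_left_comm, mul_comm]

lemma frobeniusForm_eq_dotProduct [Fintype n] (q : ℕ) (A : Matrix n n R) :
    frobeniusForm q A = (fun i => X i ^ q) ⬝ᵥ (A.map C *ᵥ X) := by
  simp only [frobeniusForm, dotProduct, Matrix.mulVec, Matrix.map_apply, Finset.mul_sum,
    smul_eq_C_mul, mul_left_comm]

lemma aeval_frobeniusForm [Fintype n] (g A : Matrix n n K) :
    aeval (fun i => ∑ j, g i j • X j) (frobeniusForm (Fintype.card K) A) =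
      frobeniusForm (Fintype.card K) (gᵀ * A * g) := by
  set gX : n → MvPolynomial n K := fun i => ∑ j, g i j • X j
  have gX_eq : gX = g.map C *ᵥ X :=
    funext fun i => Finset.sum_congr rfl fun j _ => smul_eq_C_mul _ _
  -- The `q`-th power map is additive and fixes the entries of `g`.
  have gX_pow_card : (fun i => gX i ^ Fintype.card K) =
      g.map C *ᵥ fun i => X i ^ Fintype.card K := by
    obtain ⟨p, _⟩ := CharP.exists K
    obtain ⟨m, hp, hm⟩ := FiniteField.card K p
    have := Fact.mk hp
    funext i
    simp only [gX_eq, Matrix.mulVec, dotProduct, Matrix.map_apply]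
    rw [hm, sum_pow_char_pow]
    simp only [mul_pow, ← map_pow, ← hm, FiniteField.pow_card]
  have aeval_eq : aeval gX (frobeniusForm (Fintype.card K) A) =
      (fun i => gX i ^ Fintype.card K) ⬝ᵥ (A.map C *ᵥ gX) := by
    simp only [frobeniusForm, dotProduct, Matrix.mulVec, Matrix.map_apply, Finset.mul_sum,
      map_sum, map_mul, map_pow, aeval_X, aeval_C, algebraMap_eq, smul_eq_C_mul, mul_left_comm]
  rw [aeval_eq, gX_pow_card, gX_eq, frobeniusForm_eq_dotProduct, Matrix.map_mul, Matrix.map_mul,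
    Matrix.transpose_map, ← Matrix.mulVec_mulVec, ← Matrix.mulVec_mulVec,
    Matrix.dotProduct_mulVec _ (g.map C)ᵀ, Matrix.vecMul_transpose]

lemma eval_single_one_of_isHomogeneous [Finite n] [DecidableEq n] {f : MvPolynomial n R} {m : ℕ}
    (hf : f.IsHomogeneous m) (i : n) :
    eval (Pi.single i 1) f = coeff (Finsupp.single i m) f := by
  have := Fintype.ofFinite n
  rw [eval_eq', Finset.sum_eq_single (Finsupp.single i m)]
  · rw [Finset.prod_eq_one, mul_one]
    intro j _
    obtain rfl | hj := eq_or_ne j i <;> simp [*]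
  · intro d hd hne
    obtain ⟨j, hji, hj⟩ : ∃ j ≠ i, d j ≠ 0 := by
      by_contra! h
      have d_eq : d = Finsupp.single i (d i) := by
        ext j
        obtain rfl | hj := eq_or_ne j i
        · rw [Finsupp.single_eq_same]
        · rw [Finsupp.single_eq_of_ne hj, h j hj]
      have degree_d : d.degree = m :=
        of_not_not fun h => mem_support_iff.1 hd (hf.coeff_eq_zero h)
      rw [d_eq, Finsupp.degree_single] at degree_d
      rw [degree_d] at d_eq
      exact hne d_eq
    rw [Finset.prod_eq_zero (Finset.mem_univ j) (by simp [hji, hj]), mul_zero]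
  · intro hd
    rw [notMem_support_iff.1 hd, zero_mul]

lemma exists_eq_single_add_single {q : ℕ} {d : n →₀ ℕ} (hd : d.degree = q + 1) {i : n}
    (hi : q ≤ d i) : ∃ j, d = Finsupp.single i q + Finsupp.single j 1 := by
  have hle : Finsupp.single i q ≤ d := Finsupp.single_le_iff.2 hi
  have hdeg : (d - Finsupp.single i q).degree = 1 := by
    have := congrArg Finsupp.degree (add_tsub_cancel_of_le hle)
    rw [map_add, Finsupp.degree_single, hd] at this
    omega
  obtain ⟨j, hj⟩ : d - Finsupp.single i q ∈ Set.range fun j : n => Finsupp.single j 1 := by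
    rw [Finsupp.range_single_one]
    exact hdeg
  exact ⟨j, by rw [← add_tsub_cancel_of_le hle, ← hj]⟩

lemma sub_frobeniusForm_mem_restrictDegree {R : Type*} [CommRing R] [Fintype n] {q : ℕ}
    (hq : 1 < q) {f : MvPolynomial n R} (hf : f.IsHomogeneous (q + 1)) :
    f - frobeniusForm q (.of fun i j => coeff (Finsupp.single i q + Finsupp.single j 1) f) ∈
      restrictDegree n R (q - 1) := by
  rw [mem_restrictDegree]
  intro d hd i
  by_contra! hi
  have hdeg : d.degree = q + 1 := of_not_not fun h =>
    mem_support_iff.1 hd ((hf.sub (isHomogeneous_frobeniusForm q _)).coeff_eq_zero h)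
  obtain ⟨j, rfl⟩ := exists_eq_single_add_single hdeg (i := i) (by omega)
  refine mem_support_iff.1 hd ?_
  rw [coeff_sub, coeff_frobeniusForm hq, Matrix.of_apply, sub_self]

lemma frobeniusForm_one_mem_restrictDegree [Fintype n] {m : ℕ} (hm : 1 ≤ m) {A : Matrix n n R}
    (hA : ∀ i, A i i = 0) : frobeniusForm 1 A ∈ restrictDegree n R m := by
  classical
  rw [frobeniusForm_eq_sum_monomial]
  refine Submodule.sum_mem _ fun i _ => Submodule.sum_mem _ fun j _ => ?_
  obtain rfl | hij := eq_or_ne i j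
  · simp [hA]
  rw [mem_restrictDegree]
  intro d hd k
  obtain rfl := Finset.mem_singleton.1 (support_monomial_subset hd)
  simp only [Finsupp.add_apply, Finsupp.single_apply]
  grind

end FrobeniusForm

section Vanishing

variable {n K : Type u} [Fintype n] [DecidableEq n] [Field K] [Fintype K]

/-- Reducing modulo `xᵢ^q = xᵢ` turns a form of degree `q + 1` into the sum of a reduced form of the
same degree and a quadratic form; both vanish because their degrees differ. -/
theorem exists_isAlt_eq_frobeniusForm {f : MvPolynomial n K}
    (hf : f.IsHomogeneous (Fintype.card K + 1)) (hv : ∀ v, eval v f = 0) :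
    ∃ A : Matrix n n K, (Matrix.toBilin' A).IsAlt ∧ f = frobeniusForm (Fintype.card K) A := by
  set q := Fintype.card K with hq
  have one_lt_q : 1 < q := Fintype.one_lt_card
  set A : Matrix n n K := .of fun i j => coeff (Finsupp.single i q + Finsupp.single j 1) f with hA
  have diag_A (i : n) : A i i = 0 := by
    rw [hA, Matrix.of_apply, ← Finsupp.single_add, ← eval_single_one_of_isHomogeneous hf, hv]
  have eval_one_eq_eval_q (v : n → K) :
      eval v (frobeniusForm 1 A) = eval v (frobeniusForm q A) := by
    simp only [frobeniusForm, map_sum, smul_eval, map_mul, map_pow, eval_X, hq,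
      FiniteField.pow_card, pow_one]
  have reduction_eq_zero : f - frobeniusForm q A + frobeniusForm 1 A = 0 := by
    refine eq_zero_of_eval_eq_zero _ _ _ (fun v => ?_) <| Submodule.add_mem _
      (sub_frobeniusForm_mem_restrictDegree one_lt_q hf)
      (frobeniusForm_one_mem_restrictDegree (Nat.le_sub_one_of_lt one_lt_q) diag_A)
    rw [map_add, map_sub, hv, eval_one_eq_eval_q, zero_sub, neg_add_cancel]
  have f_eq : f = frobeniusForm q A := by
    by_contra hne
    have hom_two : (f - frobeniusForm q A).IsHomogeneous 2 := by
      rw [eq_neg_of_add_eq_zero_left reduction_eq_zero]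
      exact (isHomogeneous_frobeniusForm 1 A).neg
    have := hom_two.inj_right (hf.sub (isHomogeneous_frobeniusForm q A)) (sub_ne_zero.2 hne)
    omega
  refine ⟨A, fun v => ?_, f_eq⟩
  rw [← eval_frobeniusForm, ← hq, ← f_eq, hv]

end Vanishing

section Smooth

variable {n K : Type*} [Fintype n] [Field K] [Fintype K]

lemma eval_pderiv_frobeniusForm (A : Matrix n n K) (v : n → K) (k : n) :
    eval v (pderiv k (frobeniusForm (Fintype.card K) A)) = (v ᵥ* A) k := by
  simp only [pderiv_frobeniusForm (FiniteField.cast_card_eq_zero K), map_sum, smul_eval, map_pow,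
    eval_X, FiniteField.pow_card, Matrix.vecMul, dotProduct, mul_comm]

lemma nondegenerate_of_isSmoothCubic {A : Matrix (Fin 4) (Fin 4) F2}
    (hA : IsSmoothCubic (frobeniusForm (Fintype.card F2) A)) :
    (Matrix.toBilin' A).Nondegenerate := by
  rw [LinearMap.BilinForm.nondegenerate_toBilin'_iff_det_ne_zero]
  intro det_A
  -- A vector in the left kernel of `A` is a singular point of the Frobenius form.
  obtain ⟨v, hv, hvA⟩ := Matrix.exists_vecMul_eq_zero_iff.2 det_A
  have eval_extend (p : MvPolynomial (Fin 4) F2) (hp : eval v p = 0) :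
      eval (algebraMap F2 Kbar ∘ v) (map (algebraMap F2 Kbar) p) = 0 := by
    rw [eval_map, ← eval₂_comp, hp, map_zero]
  have extend_eq_zero : algebraMap F2 Kbar ∘ v = 0 := by
    refine hA.2 _ (eval_extend _ ?_) fun k => eval_extend _ ?_
    · rw [eval_frobeniusForm, Matrix.toBilin'_apply', Matrix.dotProduct_mulVec, hvA,
        zero_dotProduct]
    · rw [eval_pderiv_frobeniusForm, hvA, Pi.zero_apply]
  refine hv (funext fun i => (algebraMap F2 Kbar).injective ?_)
  rw [Pi.zero_apply, map_zero]
  exact congrFun extend_eq_zero i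

end Smooth

section Symplectic

variable {R M K V : Type*} [CommRing R] [AddCommGroup M] [Module R M]
  [Field K] [AddCommGroup V] [Module K V]

/-- Vectors `e i`, `f i` spanning pairwise orthogonal hyperbolic planes for the bilinear form
`B`. -/
structure IsSymplecticFamily {ι : Type*} [DecidableEq ι] (B : LinearMap.BilinForm R M)
    (e f : ι → M) : Prop where
  left (i j : ι) : B (e i) (e j) = 0
  right (i j : ι) : B (f i) (f j) = 0
  pairing (i j : ι) : B (e i) (f j) = if i = j then 1 else 0

lemma IsSymplecticFamily.cons {B : LinearMap.BilinForm R M} (hB : B.IsAlt) {m : ℕ}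
    {e f : Fin m → M} (hef : IsSymplecticFamily B e f) {v w : M} (hvw : B v w = 1)
    (hve : ∀ i, B v (e i) = 0) (hvf : ∀ i, B v (f i) = 0)
    (hwe : ∀ i, B w (e i) = 0) (hwf : ∀ i, B w (f i) = 0) :
    IsSymplecticFamily B (Fin.cons v e : Fin (m + 1) → M) (Fin.cons w f : Fin (m + 1) → M) := by
  have hev (i : Fin m) : B (e i) v = 0 := hB.isRefl _ _ (hve i)
  have hew (i : Fin m) : B (e i) w = 0 := hB.isRefl _ _ (hwe i)
  have hfw (i : Fin m) : B (f i) w = 0 := hB.isRefl _ _ (hwf i)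
  constructor <;> intro i j <;> cases i using Fin.cases <;> cases j using Fin.cases <;>
    simp [hB.self_eq_zero, (Fin.succ_ne_zero _).symm, hef.left, hef.right, hef.pairing, hvw, hve,
      hvf, hwf, hev, hew, hfw]

lemma disjoint_orthogonal_span_pair {B : LinearMap.BilinForm R M} (hB : B.IsAlt) {v w : M}
    (hvw : B v w = 1) :
    Disjoint (Submodule.span R {v, w}) (B.orthogonal (Submodule.span R {v, w})) := by
  rw [Submodule.disjoint_def]
  intro x hx hx'
  obtain ⟨a, b, rfl⟩ := Submodule.mem_span_pair.1 hx
  have orth_v := hx' v (Submodule.mem_span_pair.2 ⟨1, 0, by simp⟩)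
  have orth_w := hx' w (Submodule.mem_span_pair.2 ⟨0, 1, by simp⟩)
  have hwv : B w v = -1 := by rw [← hB.neg_eq, hvw]
  simp_all [hB.self_eq_zero]

lemma exists_hyperbolic_pair [Nontrivial V] {B : LinearMap.BilinForm K V} (hB : B.SeparatingLeft) :
    ∃ v w, B v w = 1 := by
  obtain ⟨v, hv⟩ := exists_ne (0 : V)
  obtain ⟨w, hw⟩ : ∃ w, B v w ≠ 0 := by
    by_contra! h
    exact hv (hB v h)
  exact ⟨v, (B v w)⁻¹ • w, by rw [map_smul, smul_eq_mul, inv_mul_cancel₀ hw]⟩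

lemma finrank_span_pair_of_apply_eq_one {B : LinearMap.BilinForm K V} (hB : B.IsAlt) {v w : V}
    (hvw : B v w = 1) : Module.finrank K (Submodule.span K {v, w}) = 2 := by
  have hwv : B w v = -1 := by rw [← hB.neg_eq, hvw]
  have indep : LinearIndependent K ![v, w] := by
    refine LinearIndependent.pair_iff.2 fun a b h => ?_
    have apply_v : b = 0 := by simpa [hB.self_eq_zero, hvw] using congrArg (B v) h
    have apply_w : a = 0 := by simpa [hB.self_eq_zero, hwv] using congrArg (B w) h
    exact ⟨apply_w, apply_v⟩
  rw [← Matrix.range_cons_cons_empty, finrank_span_eq_card indep, Fintype.card_fin]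

theorem exists_isSymplecticFamily [FiniteDimensional K V] {B : LinearMap.BilinForm K V}
    (hB : B.IsAlt) (hB' : B.Nondegenerate) :
    ∃ (m : ℕ) (e f : Fin m → V), Module.finrank K V = 2 * m ∧ IsSymplecticFamily B e f := by
  induction hd : Module.finrank K V using Nat.strong_induction_on generalizing V with
  | _ d ih =>
  obtain _ | _ := subsingleton_or_nontrivial V
  · exact ⟨0, Fin.elim0, Fin.elim0, by rw [← hd, Module.finrank_zero_of_subsingleton],
      ⟨(Fin.elim0 ·), (Fin.elim0 ·), (Fin.elim0 ·)⟩⟩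
  obtain ⟨v, w, hvw⟩ := exists_hyperbolic_pair hB'.1
  set U := Submodule.span K {v, w}
  have finrank_U : Module.finrank K U = 2 := finrank_span_pair_of_apply_eq_one hB hvw
  have finrank_add : 2 + Module.finrank K (B.orthogonal U) = d := by
    have := U.finrank_le
    rw [LinearMap.BilinForm.finrank_orthogonal hB', finrank_U, hd]
    omega
  have nondegenerate_orthogonal : (B.restrict (B.orthogonal U)).Nondegenerate := by
    refine LinearMap.BilinForm.nondegenerate_restrict_of_disjoint_orthogonal B hB.isRefl ?_
    rw [LinearMap.BilinForm.orthogonal_orthogonal hB' hB.isRefl]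
    exact (disjoint_orthogonal_span_pair hB hvw).symm
  obtain ⟨m, e, f, hm, hef⟩ := ih (Module.finrank K (B.orthogonal U)) (by omega)
    (B := B.restrict (B.orthogonal U)) (fun x => hB x) nondegenerate_orthogonal rfl
  have v_orth (x : B.orthogonal U) : B v x = 0 := x.2 v (Submodule.mem_span_pair.2 ⟨1, 0, by simp⟩)
  have w_orth (x : B.orthogonal U) : B w x = 0 := x.2 w (Submodule.mem_span_pair.2 ⟨0, 1, by simp⟩)
  have family_in_V : IsSymplecticFamily B (fun i => (e i : V)) fun i => (f i : V) :=
    ⟨hef.left, hef.right, hef.pairing⟩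
  exact ⟨m + 1, _, _, by omega, family_in_V.cons hB hvw (fun _ => v_orth _) (fun _ => v_orth _)
    (fun _ => w_orth _) fun _ => w_orth _⟩

end Symplectic

section NormalForm

/-- The Gram matrix of `c0`: the alternating form `x₀y₃ + x₁y₂ + x₂y₁ + x₃y₀` on `𝔽₂⁴`. -/
def standardGram : Matrix (Fin 4) (Fin 4) F2 :=
  !![0, 0, 0, 1; 0, 0, 1, 0; 0, 1, 0, 0; 1, 0, 0, 0]

lemma c0_eq_frobeniusForm : c0 = frobeniusForm (Fintype.card F2) standardGram := by
  simp only [c0, frobeniusForm, standardGram, Fin.sum_univ_four, ZMod.card, Matrix.of_apply,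
    Matrix.cons_val', Matrix.cons_val_fin_one, Matrix.cons_val_zero, Matrix.cons_val_one,
    Matrix.cons_val, zero_smul, add_zero, one_smul, zero_add]
  ring

lemma exists_transpose_mul_mul_eq_standardGram {A : Matrix (Fin 4) (Fin 4) F2}
    (hA : (Matrix.toBilin' A).IsAlt) (hA' : (Matrix.toBilin' A).Nondegenerate) :
    ∃ g : GL (Fin 4) F2, (g : Matrix (Fin 4) (Fin 4) F2)ᵀ * A * g = standardGram := by
  obtain ⟨m, e, f, hm, hef⟩ := exists_isSymplecticFamily hA hA'
  obtain rfl : m = 2 := by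
    rw [Module.finrank_fin_fun] at hm
    omega
  let M : Matrix (Fin 4) (Fin 4) F2 := (Matrix.of ![e 0, e 1, f 1, f 0])ᵀ
  have gram_eq : Mᵀ * A * M = standardGram := by
    have swap (i j : Fin 2) : Matrix.toBilin' A (f i) (e j) = if i = j then 1 else 0 := by
      rw [← hA.neg_eq, hef.pairing, CharTwo.neg_eq]
      simp only [eq_comm]
    have entry (i j : Fin 4) : (Mᵀ * A * M) i j =
        Matrix.toBilin' A (![e 0, e 1, f 1, f 0] i) (![e 0, e 1, f 1, f 0] j) := by
      rw [Matrix.toBilin'_apply', Matrix.mul_assoc]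
      rfl
    ext i j
    rw [entry]
    fin_cases i <;> fin_cases j <;>
      simp [hef.left, hef.right, hef.pairing, swap, standardGram]
  have det_M : IsUnit M.det := by
    have := congrArg Matrix.det gram_eq
    rw [Matrix.det_mul, show standardGram.det = 1 by decide +kernel] at this
    exact IsUnit.of_mul_eq_one_right _ this
  exact ⟨Matrix.GeneralLinearGroup.mk'' M det_M, gram_eq⟩

end NormalForm

section Stabilizer

/-- The group of linear automorphisms preserving the bilinear form `B`; it is a symplectic group
when `B` is alternating and nondegenerate. -/
def isometryGroup {R V : Type*} [CommRing R] [AddCommGroup V] [Module R V]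
    (B : LinearMap.BilinForm R V) : Subgroup (V ≃ₗ[R] V) where
  carrier := {g | ∀ x y, B (g x) (g y) = B x y}
  one_mem' _ _ := rfl
  mul_mem' hg hh x y := (hg _ _).trans (hh x y)
  inv_mem' {g} hg x y := by
    rw [← hg]
    exact congrArg₂ (fun u v => B u v) (g.apply_symm_apply x) (g.apply_symm_apply y)

lemma mem_stab_frobeniusForm {A : Matrix (Fin 4) (Fin 4) F2} {g : GL (Fin 4) F2} :
    g ∈ stab (frobeniusForm (Fintype.card F2) A) ↔
      (g : Matrix (Fin 4) (Fin 4) F2)ᵀ * A * g = A := by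
  change act _ _ = _ ↔ _
  rw [act, aeval_frobeniusForm, (frobeniusForm_injective Fintype.one_lt_card).eq_iff]

/-- Invertible matrices as linear automorphisms, acting on column vectors. -/
def generalLinearEquiv {n R : Type*} [Fintype n] [DecidableEq n] [CommRing R] :
    GL n R ≃* ((n → R) ≃ₗ[R] (n → R)) :=
  Matrix.GeneralLinearGroup.toLin.trans (LinearMap.GeneralLinearGroup.generalLinearEquiv R _)

lemma generalLinearEquiv_mem_isometryGroup {n R : Type*} [Fintype n] [DecidableEq n] [CommRing R]
    {A : Matrix n n R} {g : GL n R} :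
    generalLinearEquiv g ∈ isometryGroup (Matrix.toBilin' A) ↔
      (g : Matrix n n R)ᵀ * A * g = A := by
  rw [← (Matrix.toBilin' (R₁ := R)).injective.eq_iff, ← Matrix.toBilin'_comp,
    LinearMap.ext_iff₂]
  rfl

/-- The stabilizer of a Frobenius form is the isometry group of its Gram matrix. -/
def stabFrobeniusFormEquiv (A : Matrix (Fin 4) (Fin 4) F2) :
    stab (frobeniusForm (Fintype.card F2) A) ≃* isometryGroup (Matrix.toBilin' A) :=
  (generalLinearEquiv.subgroupMap _).trans <| MulEquiv.subgroupCongr <| by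
    ext g
    obtain ⟨g, rfl⟩ := generalLinearEquiv.surjective g
    rw [generalLinearEquiv_mem_isometryGroup, ← mem_stab_frobeniusForm]
    exact Subgroup.mem_map_iff_mem generalLinearEquiv.injective

lemma act_injective (g : GL (Fin 4) F2) : Function.Injective (act g) :=
  Function.LeftInverse.injective (g := act ↑g⁻¹) fun f => by
    rw [act_act, Units.mul_inv, act_one]

lemma stab_act (f : MvPolynomial (Fin 4) F2) (g : GL (Fin 4) F2) :
    stab (act g f) = (stab f).map (MulAut.conj g⁻¹).toMonoidHom := by
  ext k
  rw [Subgroup.mem_map_equiv, MulAut.conj_symm_apply, inv_inv]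
  change act k (act g f) = act g f ↔ act ↑(g * k * g⁻¹) f = f
  rw [← (act_injective g).eq_iff (a := act _ f), act_act, act_act, ← Units.val_mul, ← Units.val_mul,
    inv_mul_cancel_right]

/-- Conjugation by `g`, from the stabilizer of `f` to that of an equivalent form `f'`. -/
def stabActEquiv {f f' : MvPolynomial (Fin 4) F2} {g : GL (Fin 4) F2} (h : act g f = f') :
    stab f ≃* stab f' :=
  ((MulAut.conj g⁻¹).subgroupMap (stab f)).trans (.subgroupCongr (by rw [← h, stab_act]; rfl))

end Stabilizer

section OddRefinement

variable {V : Type u} [AddCommGroup V] [Module F2 V]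

/-- A quadratic form over `𝔽₂` has Arf invariant `1` when it takes the value `1` more often than the
value `0` (Browder's "democratic" form of the invariant). Meant for finite `V`, since `Nat.card` is
`0` on infinite types. -/
def HasOddArf (Q : QuadraticForm F2 V) : Prop :=
  Nat.card {x // Q x = 0} < Nat.card {x // Q x = 1}

/-- The odd theta characteristics of `B`: quadratic forms of Arf invariant `1` with polar form
`B`. -/
def OddRefinement (B : LinearMap.BilinForm F2 V) : Type u :=
  {Q : QuadraticForm F2 V // Q.polarBilin = B ∧ HasOddArf Q}

variable {B : LinearMap.BilinForm F2 V}

namespace OddRefinement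

instance : FunLike (OddRefinement B) V F2 where
  coe Q := Q.1
  coe_injective _ _ h := Subtype.ext (DFunLike.coe_injective h)

lemma map_add (Q : OddRefinement B) (x y : V) : Q (x + y) = Q x + Q y + B x y := by
  have := QuadraticMap.map_add Q.1 x y
  rwa [← QuadraticMap.polarBilin_apply_apply, Q.2.1] at this

/-- Isometries act by transport of structure, `(g • Q) x = Q (g⁻¹ x)`. -/
instance : MulAction (isometryGroup B) (OddRefinement B) where
  smul g Q := ⟨Q.1.comp (g⁻¹ : V ≃ₗ[F2] V).toLinearMap, by
    rw [QuadraticMap.polarBilin_comp, Q.2.1]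
    exact LinearMap.ext₂ (g⁻¹).2, by
    have card_eq (c : F2) :
        Nat.card {x // Q.1 ((g⁻¹ : V ≃ₗ[F2] V) x) = c} = Nat.card {x // Q.1 x = c} :=
      Nat.card_congr ((g⁻¹ : V ≃ₗ[F2] V).toEquiv.subtypeEquiv fun _ => Iff.rfl)
    exact (card_eq 0).trans_lt (Q.2.2.trans_eq (card_eq 1).symm)⟩
  one_smul _ := rfl
  mul_smul _ _ _ := rfl

lemma smul_eq_iff {g : isometryGroup B} {Q Q' : OddRefinement B} :
    g • Q = Q' ↔ ∀ x, Q' (g.1 x) = Q x := by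
  rw [DFunLike.ext_iff, ← g.1.forall_congr_right]
  refine forall_congr' fun x => eq_comm.trans (Eq.congr_right ?_)
  exact congrArg Q (g.1.symm_apply_apply x)

end OddRefinement

/-- The symplectic transvection `x ↦ x + B v x • v` along `v`. -/
def symplecticTransvection (hB : B.IsAlt) (v : V) : isometryGroup B :=
  ⟨LinearEquiv.transvection (f := B v) (v := v) (hB v), fun x y => by
    simp only [LinearEquiv.transvection.apply, map_add, map_smul, LinearMap.add_apply,
      LinearMap.smul_apply, smul_eq_mul, hB.self_eq_zero, ← hB.neg_eq v x]
    ring⟩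

lemma OddRefinement.apply_symplecticTransvection (hB : B.IsAlt) (Q : OddRefinement B) (v x : V) :
    Q ((symplecticTransvection hB v).1 x) = Q x + (Q v + 1) * B v x := by
  have zero_or_one : ∀ c : F2, c = 0 ∨ c = 1 := by decide
  rw [symplecticTransvection, LinearEquiv.transvection.apply]
  obtain h | h := zero_or_one (B v x)
  · rw [h, zero_smul, add_zero, mul_zero, add_zero]
  · rw [h, one_smul, map_add, ← hB.neg_eq, h, CharTwo.neg_eq, mul_one, add_assoc]

lemma exists_eq_add_apply [FiniteDimensional F2 V] (hB : B.Nondegenerate)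
    {Q Q' : QuadraticForm F2 V} (hQ : Q.polarBilin = B) (hQ' : Q'.polarBilin = B) :
    ∃ a, ∀ x, Q' x = Q x + B a x := by
  have sub_additive (x y : V) : Q' (x + y) - Q (x + y) = Q' x - Q x + (Q' y - Q y) := by
    rw [QuadraticMap.map_add Q', QuadraticMap.map_add Q, ← QuadraticMap.polarBilin_apply_apply,
      ← QuadraticMap.polarBilin_apply_apply, hQ, hQ']
    ring
  let difference : V →+ F2 := AddMonoidHom.mk' (fun x => Q' x - Q x) sub_additive
  refine ⟨(B.toDual hB).symm (difference.toZModLinearMap 2), fun x => ?_⟩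
  rw [LinearMap.BilinForm.apply_toDual_symm_apply]
  exact (add_sub_cancel _ _).symm

end OddRefinement

section Standard

/-- The alternating form with Gram matrix `standardGram`. -/
abbrev standardForm : LinearMap.BilinForm F2 (Fin 4 → F2) :=
  Matrix.toBilin' standardGram

lemma standardForm_apply (x y : Fin 4 → F2) :
    standardForm x y = x 0 * y 3 + x 1 * y 2 + x 2 * y 1 + x 3 * y 0 := by
  simp [Matrix.toBilin'_apply, standardGram, Fin.sum_univ_four]

lemma isAlt_standardForm : standardForm.IsAlt := fun x => by
  rw [standardForm_apply]
  linear_combination (x 0 * x 3 + x 1 * x 2) * CharTwo.two_eq_zero (R := F2)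

lemma nondegenerate_standardForm : standardForm.Nondegenerate := by
  rw [LinearMap.BilinForm.nondegenerate_toBilin'_iff_det_ne_zero]
  decide +kernel

/-- The split quadratic form `x₀x₃ + x₁x₂`, the base point among the quadratic forms with polar form
`standardForm`. -/
def hyperbolicForm : QuadraticForm F2 (Fin 4 → F2) :=
  .linMulLin (.proj 0) (.proj 3) + .linMulLin (.proj 1) (.proj 2)

/-- The quadratic form with polar form `standardForm` attached to the vector `a`. -/
def refinement (a : Fin 4 → F2) : QuadraticForm F2 (Fin 4 → F2) :=
  hyperbolicForm + .linMulLin (standardForm a) (standardForm a)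

lemma hyperbolicForm_apply (x : Fin 4 → F2) : hyperbolicForm x = x 0 * x 3 + x 1 * x 2 :=
  rfl

lemma refinement_apply (a x : Fin 4 → F2) :
    refinement a x = hyperbolicForm x + standardForm a x := by
  have mul_self : ∀ c : F2, c * c = c := by decide
  exact congrArg (hyperbolicForm x + ·) (mul_self _)

lemma polarBilin_hyperbolicForm : hyperbolicForm.polarBilin = standardForm :=
  LinearMap.ext₂ fun x y => by
    simp only [QuadraticMap.polarBilin_apply_apply, QuadraticMap.polar, hyperbolicForm_apply,
      standardForm_apply, Pi.add_apply]
    ring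

lemma polarBilin_refinement (a : Fin 4 → F2) : (refinement a).polarBilin = standardForm := by
  rw [← polarBilin_hyperbolicForm]
  refine LinearMap.ext₂ fun x y => ?_
  simp only [QuadraticMap.polarBilin_apply_apply, QuadraticMap.polar, refinement_apply, map_add]
  ring

lemma hasOddArf_refinement_iff (a : Fin 4 → F2) :
    HasOddArf (refinement a) ↔ hyperbolicForm a = 1 := by
  simp only [HasOddArf, refinement_apply, hyperbolicForm_apply, standardForm_apply,
    Nat.card_eq_fintype_card]
  revert a
  decide +kernel

lemma refinement_injective : Function.Injective refinement := by
  intro a b h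
  rw [← sub_eq_zero]
  refine nondegenerate_standardForm.1 _ fun x => ?_
  have := DFunLike.congr_fun h x
  rw [refinement_apply, refinement_apply, add_right_inj] at this
  rw [map_sub, LinearMap.sub_apply, this, sub_self]

/-- The vectors indexing the odd theta characteristics of `standardForm`: those on which
`hyperbolicForm` does not vanish. -/
abbrev OddVector : Type := {a : Fin 4 → F2 // hyperbolicForm a = 1}

/-- The odd theta characteristic attached to an odd vector. -/
def oddRefinement (a : OddVector) : OddRefinement standardForm :=
  ⟨refinement a, polarBilin_refinement a, (hasOddArf_refinement_iff a).2 a.2⟩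

lemma oddRefinement_apply (a : OddVector) (x : Fin 4 → F2) :
    oddRefinement a x = hyperbolicForm x + standardForm a x :=
  refinement_apply a x

lemma oddRefinement_bijective : Function.Bijective oddRefinement := by
  refine ⟨fun a b h => Subtype.ext (refinement_injective (congrArg Subtype.val h)), fun Q => ?_⟩
  obtain ⟨a, ha⟩ :=
    exists_eq_add_apply nondegenerate_standardForm polarBilin_hyperbolicForm Q.2.1
  have refinement_eq : refinement a = Q.1 := QuadraticMap.ext fun x => by
    rw [refinement_apply, ha]
  have hQ := Q.2.2
  rw [← refinement_eq, hasOddArf_refinement_iff] at hQ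
  exact ⟨⟨a, hQ⟩, Subtype.ext refinement_eq⟩

lemma card_oddVector : Nat.card OddVector = 6 := by
  simp only [OddVector, hyperbolicForm_apply, Nat.card_eq_fintype_card]
  decide +kernel

lemma exists_oddVector_add_eq (v : Fin 4 → F2) : ∃ a b : OddVector, a.1 + b.1 = v := by
  simp only [Subtype.exists, hyperbolicForm_apply]
  revert v
  decide +kernel

lemma toPermHom_oddRefinement_injective :
    Function.Injective (MulAction.toPermHom (isometryGroup standardForm)
      (OddRefinement standardForm)) := by
  rw [injective_iff_map_eq_one]
  intro g hg
  have smul_eq (Q : OddRefinement standardForm) : g • Q = Q := congrArg (· Q) hg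
  have invariant (a : OddVector) (x : Fin 4 → F2) :
      hyperbolicForm (g.1 x) + standardForm a (g.1 x) = hyperbolicForm x + standardForm a x := by
    rw [← oddRefinement_apply, ← oddRefinement_apply]
    exact OddRefinement.smul_eq_iff.1 (smul_eq _) x
  refine Subtype.ext (LinearEquiv.ext fun x => ?_)
  change g.1 x = x
  rw [← sub_eq_zero]
  refine nondegenerate_standardForm.2 _ fun v => ?_
  obtain ⟨a, b, rfl⟩ := exists_oddVector_add_eq v
  rw [map_add, LinearMap.add_apply, map_sub, map_sub]
  linear_combination invariant a x - invariant b x +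
    (standardForm b (g.1 x) - standardForm b x) * CharTwo.two_eq_zero (R := F2)

lemma oddRefinement_add_apply (a b : OddVector) (x : Fin 4 → F2) :
    oddRefinement a x + standardForm (a + b) x = oddRefinement b x := by
  rw [oddRefinement_apply, oddRefinement_apply, map_add, LinearMap.add_apply]
  linear_combination standardForm a x * CharTwo.two_eq_zero (R := F2)

lemma oddRefinement_apply_add (a b : OddVector) : oddRefinement a (a + b) = 0 := by
  rw [oddRefinement_apply, hyperbolicForm_apply, standardForm_apply]
  obtain ⟨a, ha⟩ := a
  obtain ⟨b, hb⟩ := b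
  rw [hyperbolicForm_apply] at ha hb
  revert a b
  decide +kernel

lemma oddRefinement_apply_add_of_ne {a b c : OddVector} (hab : a ≠ b) (hca : c ≠ a) (hcb : c ≠ b) :
    oddRefinement c (a + b) = 1 := by
  rw [oddRefinement_apply, hyperbolicForm_apply, standardForm_apply]
  obtain ⟨a, ha⟩ := a
  obtain ⟨b, hb⟩ := b
  obtain ⟨c, hc⟩ := c
  rw [Ne, Subtype.mk.injEq] at hab hca hcb
  rw [hyperbolicForm_apply] at ha hb hc
  revert a b c
  decide +kernel

open scoped Classical in
lemma toPermHom_symplecticTransvection {a b : OddVector} (hab : a ≠ b) :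
    MulAction.toPermHom (isometryGroup standardForm) (OddRefinement standardForm)
      (symplecticTransvection isAlt_standardForm (a + b)) =
        Equiv.swap (oddRefinement a) (oddRefinement b) := by
  ext1 Q
  obtain ⟨c, rfl⟩ := oddRefinement_bijective.2 Q
  rw [MulAction.toPermHom_apply, MulAction.toPerm_apply, OddRefinement.smul_eq_iff]
  intro x
  rw [OddRefinement.apply_symplecticTransvection]
  obtain rfl | hca := eq_or_ne c a
  · rw [Equiv.swap_apply_left, add_comm c.1, oddRefinement_apply_add, zero_add, one_mul,
      oddRefinement_add_apply]
  obtain rfl | hcb := eq_or_ne c b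
  · rw [Equiv.swap_apply_right, oddRefinement_apply_add, zero_add, one_mul,
      oddRefinement_add_apply]
  · rw [Equiv.swap_apply_of_ne_of_ne (oddRefinement_bijective.1.ne hca)
      (oddRefinement_bijective.1.ne hcb), oddRefinement_apply_add_of_ne hab hca hcb,
      CharTwo.add_self_eq_zero, zero_mul, add_zero]

lemma toPermHom_oddRefinement_surjective :
    Function.Surjective (MulAction.toPermHom (isometryGroup standardForm)
      (OddRefinement standardForm)) := by
  classical
  have : Finite (OddRefinement standardForm) := .of_surjective _ oddRefinement_bijective.2
  rw [← MonoidHom.range_eq_top, eq_top_iff, ← Equiv.Perm.closure_isSwap, Subgroup.closure_le]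
  rintro _ ⟨P, Q, hPQ, rfl⟩
  obtain ⟨a, rfl⟩ := oddRefinement_bijective.2 P
  obtain ⟨b, rfl⟩ := oddRefinement_bijective.2 Q
  exact ⟨_, toPermHom_symplecticTransvection fun h => hPQ (congrArg _ h)⟩

/-- The isomorphism `Sp₄(2) ≅ S₆` given by the action on the six odd theta characteristics. -/
def isometryGroupEquivPerm : isometryGroup standardForm ≃* Equiv.Perm (Fin 6) :=
  (MulEquiv.ofBijective _
    ⟨toPermHom_oddRefinement_injective, toPermHom_oddRefinement_surjective⟩).trans
      ((Equiv.ofBijective _ oddRefinement_bijective).symm.trans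
        (Finite.equivFinOfCardEq card_oddVector)).permCongrHom

end Standard

/-- a smooth cubic form over `𝔽₂` vanishing at every point of `𝔽₂⁴` is
`GL₄(𝔽₂)`-equivalent to `c₀`, and its stabilizer is isomorphic to `S₆`. -/
theorem vanishing_smooth_cubic_is_c0 (f : MvPolynomial (Fin 4) F2)
    (hf : IsSmoothCubic f) (hv : ∀ v : Fin 4 → F2, eval v f = 0) :
    (∃ g : GL (Fin 4) F2, act (g : Matrix (Fin 4) (Fin 4) F2) f = c0) ∧
    Nonempty (stab f ≃* Equiv.Perm (Fin 6)) := by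
  obtain ⟨A, alternating, rfl⟩ := exists_isAlt_eq_frobeniusForm hf.1 hv
  obtain ⟨g, hg⟩ := exists_transpose_mul_mul_eq_standardGram alternating
    (nondegenerate_of_isSmoothCubic hf)
  have act_eq : act g (frobeniusForm (Fintype.card F2) A) =
      frobeniusForm (Fintype.card F2) standardGram := by
    rw [act, aeval_frobeniusForm, hg]
  exact ⟨⟨g, act_eq.trans c0_eq_frobeniusForm.symm⟩,
    ⟨(stabActEquiv act_eq).trans
      ((stabFrobeniusFormEquiv standardGram).trans isometryGroupEquivPerm)⟩⟩
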